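/- Chain rule for the geometric Rényi divergence: Let α ∈ (1,2], let E, F : M_d(ℂ) → M_{d'}(ℂ) be quantum channels, and let ρ, σ be states on ℂ^d. Then 𝐷̂_α(E(ρ)‖F(σ)) ≤ 𝐷̂_α(ρ‖σ) + 𝐷̂_α(E‖F) in the extended reals, where 𝐷̂_α(E‖F) denotes the channel divergence induced by 𝐷̂_α. -/

import Mathlib

open scoped Kronecker ComplexOrder

noncomputable section

namespace QCD

attribute [local instance] Classical.propDecidable

variable {n m : Type} [Fintype n] [DecidableEq n] [Fintype m] [DecidableEq m]

/-- The real part of the trace of a complex matrix. -/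
def rtr (A : Matrix n n ℂ) : ℝ := (A.trace).re

/-- A quantum state: positive semidefinite with trace one. -/
def IsState (ρ : Matrix n n ℂ) : Prop := ρ.PosSemidef ∧ ρ.trace = 1

/-- Loewner order: `A ≤ B` iff `B - A` is positive semidefinite. -/
def loewnerLE (A B : Matrix n n ℂ) : Prop := (B - A).PosSemidef

/-- Support containment (for PSD matrices): `ker σ ⊆ ker ρ`. -/
def SuppLE (ρ σ : Matrix n n ℂ) : Prop := ∀ v : n → ℂ, σ.mulVec v = 0 → ρ.mulVec v = 0

/-- Functional calculus for Hermitian matrices (junk value `0` otherwise). -/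
def matFun (f : ℝ → ℝ) (A : Matrix n n ℂ) : Matrix n n ℂ :=
  if hA : A.IsHermitian then
    (hA.eigenvectorUnitary : Matrix n n ℂ) *
      Matrix.diagonal (fun i => (f (hA.eigenvalues i) : ℂ)) *
      (star (hA.eigenvectorUnitary : Matrix n n ℂ))
  else 0

/-- Matrix square root via functional calculus. -/
def msqrt (A : Matrix n n ℂ) : Matrix n n ℂ := matFun Real.sqrt A

/-- Matrix real power taken on the support (`0 ^ t := 0`). -/
def mpow (A : Matrix n n ℂ) (t : ℝ) : Matrix n n ℂ :=
  matFun (fun x => if x = 0 then 0 else x ^ t) A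

/-- Matrix base-2 logarithm on the support. -/
def mlog (A : Matrix n n ℂ) : Matrix n n ℂ := matFun (Real.logb 2) A

/-- Positive part of a Hermitian matrix. -/
def mposPart (A : Matrix n n ℂ) : Matrix n n ℂ := matFun (fun x => max x 0) A

/-- Trace norm. -/
def traceNorm (A : Matrix n m ℂ) : ℝ := rtr (msqrt (A.conjTranspose * A))

/-- Base-2 logarithm as an extended real (`⊥` on nonpositive input). -/
def elog (x : ℝ) : EReal := if x ≤ 0 then ⊥ else ((Real.logb 2 x : ℝ) : EReal)

/-- Base-2 logarithm of an extended real. -/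
def elogE (x : EReal) : EReal := if x = ⊤ then ⊤ else elog x.toReal

/-- `2 ^ x` for an extended real `x`. -/
def epow2 (x : EReal) : EReal :=
  if x = ⊤ then ⊤ else if x = ⊥ then 0 else ((((2:ℝ) ^ x.toReal : ℝ)) : EReal)

/-- Umegaki relative entropy (base 2), `⊤` if the support condition fails. -/
def relEntropy (ρ σ : Matrix n n ℂ) : EReal :=
  if SuppLE ρ σ then ((rtr (ρ * (mlog ρ - mlog σ)) : ℝ) : EReal) else ⊤

/-- Petz–Rényi divergence (base 2). -/
def petzRenyi (α : ℝ) (ρ σ : Matrix n n ℂ) : EReal :=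
  if 1 < α ∧ ¬ SuppLE ρ σ then ⊤
  else (((α - 1)⁻¹ : ℝ) : EReal) * elog (rtr (mpow ρ α * mpow σ (1 - α)))

/-- Geometric (maximal) Rényi divergence (base 2). -/
def geomRenyi (α : ℝ) (ρ σ : Matrix n n ℂ) : EReal :=
  if SuppLE ρ σ then
    (((α - 1)⁻¹ : ℝ) : EReal) *
      elog (rtr (σ * mpow (mpow σ (-(1/2 : ℝ)) * ρ * mpow σ (-(1/2 : ℝ))) α))
  else ⊤

/-- Max-relative entropy (base 2). -/
def dMax (ρ σ : Matrix n n ℂ) : EReal :=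
  sInf {x : EReal | ∃ lam : ℝ, x = (lam : EReal) ∧ loewnerLE ρ ((((2:ℝ) ^ lam : ℝ) : ℂ) • σ)}

/-- Uhlmann fidelity. -/
def fidelity (ρ σ : Matrix n n ℂ) : ℝ := (rtr (msqrt (msqrt σ * ρ * msqrt σ))) ^ 2

/-- Sine (purified) distance. -/
def sineDist (ρ σ : Matrix n n ℂ) : ℝ := Real.sqrt (1 - fidelity ρ σ)

/-- Smoothed max-relative entropy: smoothing over states in the sine-distance ball. -/
def dMaxSmooth (δ : ℝ) (ρ σ : Matrix n n ℂ) : EReal :=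
  ⨅ (ρ' : Matrix n n ℂ) (_ : IsState ρ' ∧ sineDist ρ ρ' ≤ δ), dMax ρ' σ

/-- Hypothesis testing divergence (base 2). -/
def dH (ε : ℝ) (ρ σ : Matrix n n ℂ) : EReal :=
  - elog (sInf {x : ℝ | ∃ T : Matrix n n ℂ,
      T.PosSemidef ∧ ((1 : Matrix n n ℂ) - T).PosSemidef ∧ 1 - ε ≤ rtr (T * ρ) ∧ x = rtr (T * σ)})

/-- The quantity `c_γ(ρ‖σ)`. -/
def cGamma (γ : ℝ) (ρ σ : Matrix n n ℂ) : EReal :=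
  ((γ⁻¹ : ℝ) : EReal) *
    elogE (epow2 ((γ : ℝ) * petzRenyi (1 + γ) ρ σ) +
           epow2 (((-γ : ℝ) : EReal) * petzRenyi (1 - γ) ρ σ) + 1)

/-- Binary entropy (base 2). -/
def binEnt (x : ℝ) : ℝ := -(x * Real.logb 2 x) - (1 - x) * Real.logb 2 (1 - x)

/-- Action of `id_k ⊗ Φ` on block matrices. -/
def blockApply {k : Type} (Φ : Matrix n n ℂ →ₗ[ℂ] Matrix m m ℂ)
    (M : Matrix (k × n) (k × n) ℂ) : Matrix (k × m) (k × m) ℂ :=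
  Matrix.of fun p q => Φ (Matrix.of fun a b => M (p.1, a) (q.1, b)) p.2 q.2

/-- Action of `Φ ⊗ id_k` on block matrices. -/
def blockApplyRight {k : Type} (Φ : Matrix n n ℂ →ₗ[ℂ] Matrix m m ℂ)
    (M : Matrix (n × k) (n × k) ℂ) : Matrix (m × k) (m × k) ℂ :=
  Matrix.of fun p q => Φ (Matrix.of fun a b => M (a, p.2) (b, q.2)) p.1 q.1

/-- Quantum channel: trace preserving and completely positive. -/
def IsQChannel (Φ : Matrix n n ℂ →ₗ[ℂ] Matrix m m ℂ) : Prop :=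
  (∀ M : Matrix n n ℂ, (Φ M).trace = M.trace) ∧
  (∀ k : ℕ, 1 ≤ k → ∀ M : Matrix (Fin k × n) (Fin k × n) ℂ, M.PosSemidef →
    (blockApply Φ M).PosSemidef)

/-- `id_k ⊗ Φ` as a linear map. -/
def blockApplyL (k : Type) (Φ : Matrix n n ℂ →ₗ[ℂ] Matrix m m ℂ) :
    Matrix (k × n) (k × n) ℂ →ₗ[ℂ] Matrix (k × m) (k × m) ℂ where
  toFun := blockApply Φ
  map_add' M N := by
    ext p q
    show Φ (Matrix.of fun a b => (M + N) (p.1, a) (q.1, b)) p.2 q.2 = _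
    have h : (Matrix.of fun a b => (M + N) (p.1, a) (q.1, b)) =
        (Matrix.of fun a b => M (p.1, a) (q.1, b)) +
          (Matrix.of fun a b => N (p.1, a) (q.1, b)) := rfl
    rw [h, map_add]
    rfl
  map_smul' c M := by
    ext p q
    show Φ (Matrix.of fun a b => (c • M) (p.1, a) (q.1, b)) p.2 q.2 = _
    have h : (Matrix.of fun a b => (c • M) (p.1, a) (q.1, b)) =
        c • (Matrix.of fun a b => M (p.1, a) (q.1, b)) := rfl
    rw [h, map_smul]
    rfl

/-- `Φ ⊗ id_k` as a linear map. -/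
def blockApplyRightL (k : Type) (Φ : Matrix n n ℂ →ₗ[ℂ] Matrix m m ℂ) :
    Matrix (n × k) (n × k) ℂ →ₗ[ℂ] Matrix (m × k) (m × k) ℂ where
  toFun := blockApplyRight Φ
  map_add' M N := by
    ext p q
    show Φ (Matrix.of fun a b => (M + N) (a, p.2) (b, q.2)) p.1 q.1 = _
    have h : (Matrix.of fun a b => (M + N) (a, p.2) (b, q.2)) =
        (Matrix.of fun a b => M (a, p.2) (b, q.2)) +
          (Matrix.of fun a b => N (a, p.2) (b, q.2)) := rfl
    rw [h, map_add]
    rfl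
  map_smul' c M := by
    ext p q
    show Φ (Matrix.of fun a b => (c • M) (a, p.2) (b, q.2)) p.1 q.1 = _
    have h : (Matrix.of fun a b => (c • M) (a, p.2) (b, q.2)) =
        c • (Matrix.of fun a b => M (a, p.2) (b, q.2)) := rfl
    rw [h, map_smul]
    rfl

/-- Tensor product of two channels (Kronecker product action). -/
def tensorChannel {n₁ m₁ n₂ m₂ : Type}
    (E₁ : Matrix n₁ n₁ ℂ →ₗ[ℂ] Matrix m₁ m₁ ℂ) (E₂ : Matrix n₂ n₂ ℂ →ₗ[ℂ] Matrix m₂ m₂ ℂ) :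
    Matrix (n₁ × n₂) (n₁ × n₂) ℂ →ₗ[ℂ] Matrix (m₁ × m₂) (m₁ × m₂) ℂ :=
  (blockApplyRightL m₂ E₁).comp (blockApplyL n₁ E₂)

/-- Index type for `k`-fold tensor powers. -/
def tpow (ι : Type) : ℕ → Type
  | 0 => PUnit
  | (k+1) => tpow ι k × ι

def tpowFintype (ι : Type) [Fintype ι] : ∀ k : ℕ, Fintype (tpow ι k)
  | 0 => inferInstanceAs (Fintype PUnit)
  | (k+1) => letI := tpowFintype ι k; inferInstanceAs (Fintype (tpow ι k × ι))

instance (ι : Type) [Fintype ι] (k : ℕ) : Fintype (tpow ι k) := tpowFintype ι k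

def tpowDecEq (ι : Type) [DecidableEq ι] : ∀ k : ℕ, DecidableEq (tpow ι k)
  | 0 => inferInstanceAs (DecidableEq PUnit)
  | (k+1) => letI := tpowDecEq ι k; inferInstanceAs (DecidableEq (tpow ι k × ι))

instance (ι : Type) [DecidableEq ι] (k : ℕ) : DecidableEq (tpow ι k) := tpowDecEq ι k

/-- `k`-fold Kronecker tensor power of a matrix. -/
def tpowMat (ρ : Matrix n n ℂ) : ∀ k : ℕ, Matrix (tpow n k) (tpow n k) ℂ
  | 0 => 1
  | (k+1) => (tpowMat ρ k) ⊗ₖ ρ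

/-- `k`-fold tensor power of a channel. -/
def tpowChannel (Φ : Matrix n n ℂ →ₗ[ℂ] Matrix m m ℂ) :
    ∀ k : ℕ, Matrix (tpow n k) (tpow n k) ℂ →ₗ[ℂ] Matrix (tpow m k) (tpow m k) ℂ
  | 0 => LinearMap.id
  | (k+1) => tensorChannel (tpowChannel Φ k) Φ

/-- Channel divergence induced by a divergence `𝔇` on states:
sup over `k ≥ 1` and input states `ν` on `ℂ^k ⊗ ℂ^d`. -/
def chDiv (𝔇 : ∀ (p : Type) [Fintype p] [DecidableEq p], Matrix p p ℂ → Matrix p p ℂ → EReal)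
    (E F : Matrix n n ℂ →ₗ[ℂ] Matrix m m ℂ) : EReal :=
  ⨆ (k : ℕ) (_ : 1 ≤ k) (ν : Matrix (Fin k × n) (Fin k × n) ℂ) (_ : IsState ν),
    𝔇 (Fin k × m) (blockApply E ν) (blockApply F ν)

/-- The geometric Rényi divergence as a divergence family. -/
def geomD (α : ℝ) : ∀ (p : Type) [Fintype p] [DecidableEq p],
    Matrix p p ℂ → Matrix p p ℂ → EReal :=
  fun _ _ _ => geomRenyi α

/-- The Umegaki relative entropy as a divergence family. -/
def relD : ∀ (p : Type) [Fintype p] [DecidableEq p],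
    Matrix p p ℂ → Matrix p p ℂ → EReal :=
  fun _ _ _ => relEntropy

/-- The hypothesis testing divergence as a divergence family. -/
def dHD (ε : ℝ) : ∀ (p : Type) [Fintype p] [DecidableEq p],
    Matrix p p ℂ → Matrix p p ℂ → EReal :=
  fun _ _ _ => dH ε

/-- Regularized channel relative entropy. -/
def regRelEntropy (E F : Matrix n n ℂ →ₗ[ℂ] Matrix m m ℂ) : EReal :=
  ⨆ (k : ℕ) (_ : 1 ≤ k),
    (((k : ℝ)⁻¹ : ℝ) : EReal) * chDiv relD (tpowChannel E k) (tpowChannel F k)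

end QCD

namespace QCD

/-! A *reverse test* writes `ρ = ∑ c i • M i` with `∑ M i ≤ σ`, and `Q̂_α(ρ‖σ)` is the least cost
`∑ c i ^ α * tr (M i)` of a reverse test (Matsumoto). The spectral decomposition of
`σ^{-1/2} ρ σ^{-1/2}` attains this value. Minimality is an operator Jensen inequality for `x ^ α`,
which the integral representation of the power reduces to the functions `x² / (u x + s)`; for these
it amounts to completing a square.

For the chain rule take an optimal reverse test `(c, M)` of `(ρ, σ)`. The operators `M i` are all
obtained from one purified state `ν` of `∑ c i ^ α • M i / Q̂_α(ρ‖σ)` by acting with positive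
operators on the reference system. Combining them with an optimal reverse test of
`((id ⊗ E) ν, (id ⊗ F) ν)` gives a reverse test of `(E ρ, F σ)`, and the choice of `ν` makes its
cost at most the product of the two costs.
-/

open Matrix
open scoped MatrixOrder

section Trace

variable {n : Type} [Fintype n]

lemma rtr_smul (c : ℝ) (A : Matrix n n ℂ) : rtr (c • A) = c * rtr A := by
  simp [rtr, trace_smul]

lemma rtr_sum {ι : Type*} (s : Finset ι) (A : ι → Matrix n n ℂ) :
    rtr (∑ i ∈ s, A i) = ∑ i ∈ s, rtr (A i) := by
  simp [rtr, trace_sum]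

lemma rtr_nonneg {A : Matrix n n ℂ} (hA : A.PosSemidef) : 0 ≤ rtr A :=
  (Complex.nonneg_iff.mp hA.trace_nonneg).1

lemma rtr_mono {A B : Matrix n n ℂ} (h : A ≤ B) : rtr A ≤ rtr B := by
  simpa [rtr, trace_sub] using rtr_nonneg (le_iff.mp h)

lemma rtr_mul_comm (A B : Matrix n n ℂ) : rtr (A * B) = rtr (B * A) :=
  congrArg Complex.re (trace_mul_comm A B)

lemma trace_eq_ofReal_rtr {A : Matrix n n ℂ} (hA : A.PosSemidef) : A.trace = (rtr A : ℂ) :=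
  Complex.ext rfl (Complex.nonneg_iff.mp hA.trace_nonneg).2.symm

lemma rtr_eq_zero_iff {A : Matrix n n ℂ} (hA : A.PosSemidef) : rtr A = 0 ↔ A = 0 := by
  rw [← hA.trace_eq_zero_iff, trace_eq_ofReal_rtr hA, Complex.ofReal_eq_zero]

lemma rtr_mul_nonneg {A B : Matrix n n ℂ} (hA : A.PosSemidef) (hB : B.PosSemidef) :
    0 ≤ rtr (A * B) := by
  classical
  obtain ⟨X, rfl⟩ := CStarAlgebra.nonneg_iff_eq_star_mul_self.mp hA.nonneg
  rw [mul_assoc, rtr_mul_comm]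
  exact rtr_nonneg (hB.mul_mul_conjTranspose_same X)

lemma rtr_mul_le_rtr_mul {A B C : Matrix n n ℂ} (hA : A.PosSemidef) (h : B ≤ C) :
    rtr (A * B) ≤ rtr (A * C) := by
  simpa [rtr, mul_sub, trace_sub] using rtr_mul_nonneg hA (le_iff.mp h)

end Trace

section FunctionalCalculus

variable {n : Type} [Fintype n] [DecidableEq n]

lemma continuousOn_spectrum (f : ℝ → ℝ) (A : Matrix n n ℂ) : ContinuousOn f (spectrum ℝ A) :=
  A.finite_real_spectrum.continuousOn f

lemma matFun_eq_cfc (f : ℝ → ℝ) (A : Matrix n n ℂ) : matFun f A = cfc f A := by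
  by_cases hA : A.IsHermitian
  · rw [matFun, dif_pos hA, hA.cfc_eq]
    rfl
  · rw [matFun, dif_neg hA]
    exact (cfc_apply_of_not_predicate (p := IsSelfAdjoint) A hA).symm

lemma matFun_mul_matFun (f g : ℝ → ℝ) (A : Matrix n n ℂ) :
    matFun f A * matFun g A = matFun (fun x => f x * g x) A := by
  simp only [matFun_eq_cfc]
  exact (cfc_mul f g A (continuousOn_spectrum f A) (continuousOn_spectrum g A)).symm

lemma isHermitian_matFun (f : ℝ → ℝ) (A : Matrix n n ℂ) : (matFun f A).IsHermitian := by
  rw [matFun_eq_cfc]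
  exact cfc_predicate f A

lemma matFun_congr {f g : ℝ → ℝ} {A : Matrix n n ℂ} (hA : A.PosSemidef)
    (h : ∀ x, 0 ≤ x → f x = g x) : matFun f A = matFun g A := by
  simp only [matFun_eq_cfc]
  exact cfc_congr fun x hx => h x (spectrum_nonneg_of_nonneg hA.nonneg hx)

lemma matFun_id {A : Matrix n n ℂ} (hA : A.IsHermitian) : matFun (fun x => x) A = A := by
  rw [matFun_eq_cfc]
  exact cfc_id' ℝ A hA

lemma matFun_one {A : Matrix n n ℂ} (hA : A.IsHermitian) : matFun (fun _ => 1) A = 1 := by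
  rw [matFun_eq_cfc]
  exact cfc_const_one ℝ A hA

lemma matFun_add (f g : ℝ → ℝ) (A : Matrix n n ℂ) :
    matFun (fun x => f x + g x) A = matFun f A + matFun g A := by
  simp only [matFun_eq_cfc]
  exact cfc_add A f g (continuousOn_spectrum f A) (continuousOn_spectrum g A)

lemma matFun_const_mul (c : ℝ) (f : ℝ → ℝ) (A : Matrix n n ℂ) :
    matFun (fun x => c * f x) A = c • matFun f A := by
  simp only [matFun_eq_cfc]
  exact cfc_const_mul c f A (continuousOn_spectrum f A)

lemma exists_matFun_eq_sum {A : Matrix n n ℂ} (hA : A.IsHermitian) :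
    ∃ E : n → Matrix n n ℂ, (∀ i, (E i).PosSemidef) ∧
      ∀ f : ℝ → ℝ, matFun f A = ∑ i, f (hA.eigenvalues i) • E i := by
  let U : Matrix n n ℂ := (hA.eigenvectorUnitary).1
  refine ⟨fun i => U * single i i 1 * Uᴴ, fun i => ?_, fun f => ?_⟩
  · refine PosSemidef.mul_mul_conjTranspose_same ?_ U
    rw [← diagonal_single]
    exact PosSemidef.diagonal (Pi.single_nonneg.mpr zero_le_one)
  · have hdiag : diagonal (fun i => (f (hA.eigenvalues i) : ℂ)) =
        ∑ i, f (hA.eigenvalues i) • single i i (1 : ℂ) := by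
      simp [← sum_single_eq_diagonal, smul_single]
    rw [matFun, dif_pos hA, hdiag]
    simp only [Matrix.mul_sum, Matrix.sum_mul, mul_smul_comm, smul_mul_assoc]
    rfl

lemma isHermitian_mpow (A : Matrix n n ℂ) (t : ℝ) : (mpow A t).IsHermitian :=
  isHermitian_matFun _ A

lemma mpow_mul_mpow {A : Matrix n n ℂ} (hA : A.PosSemidef) (s t : ℝ) :
    mpow A s * mpow A t = mpow A (s + t) := by
  simp only [mpow, matFun_mul_matFun]
  refine matFun_congr hA fun x hx => ?_
  split_ifs with h0
  · exact mul_zero 0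
  · exact (Real.rpow_add (hx.lt_of_ne' h0) s t).symm

lemma mpow_one {A : Matrix n n ℂ} (hA : A.PosSemidef) : mpow A 1 = A := by
  conv_rhs => rw [← matFun_id hA.isHermitian]
  refine matFun_congr hA fun x _ => ?_
  split_ifs with h0
  · exact h0.symm
  · exact Real.rpow_one x

lemma mpow_neg_half_mul_mul {A : Matrix n n ℂ} (hA : A.PosSemidef) :
    mpow A (-(1/2)) * A * mpow A (-(1/2)) = mpow A 0 := by
  nth_rw 2 [← mpow_one hA]
  rw [mpow_mul_mpow hA, mpow_mul_mpow hA]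
  norm_num

lemma mpow_zero_le_one (A : Matrix n n ℂ) : mpow A 0 ≤ 1 := by
  rw [mpow, matFun_eq_cfc]
  refine cfc_le_one _ A fun x _ => ?_
  split_ifs
  · exact zero_le_one
  · exact (Real.rpow_zero x).le

lemma exists_mpow_eq_sum {A : Matrix n n ℂ} (hA : A.PosSemidef) :
    ∃ (ι : Type) (_ : Fintype ι) (c : ι → ℝ) (E : ι → Matrix n n ℂ),
      (∀ i, 0 < c i) ∧ (∀ i, (E i).PosSemidef) ∧ ∀ t : ℝ, mpow A t = ∑ i, c i ^ t • E i := by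
  have hA' := hA.isHermitian
  obtain ⟨E, hE, hf⟩ := exists_matFun_eq_sum hA'
  refine ⟨{i // 0 < hA'.eigenvalues i}, inferInstance, fun i => hA'.eigenvalues i, fun i => E i,
    fun i => i.2, fun i => hE i, fun t => ?_⟩
  rw [mpow, hf]
  symm
  refine Fintype.sum_of_injective _ Subtype.val_injective _ _ (fun i hi => ?_) fun i => ?_
  · have h0 : hA'.eigenvalues i = 0 :=
      le_antisymm (by simpa using hi) (hA.eigenvalues_nonneg i)
    rw [if_pos h0, zero_smul]
  · rw [if_neg i.2.ne']

end FunctionalCalculus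

section Support

variable {n : Type} [Fintype n] {ρ σ : Matrix n n ℂ}

lemma suppLE_of_le (hρ : ρ.PosSemidef) (h : ρ ≤ σ) : SuppLE ρ σ := by
  intro v hv
  have hle : star v ⬝ᵥ ρ *ᵥ v ≤ 0 := by
    simpa [sub_mulVec, dotProduct_sub, hv] using (le_iff.mp h).dotProduct_mulVec_nonneg v
  exact (hρ.dotProduct_mulVec_zero_iff v).mp (hle.antisymm (hρ.dotProduct_mulVec_nonneg v))

lemma SuppLE.smul (h : SuppLE ρ σ) (c : ℝ) : SuppLE (c • ρ) σ := by
  intro v hv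
  rw [smul_mulVec, h v hv, smul_zero]

lemma suppLE_sum {ι : Type*} {s : Finset ι} {A : ι → Matrix n n ℂ}
    (h : ∀ i ∈ s, SuppLE (A i) σ) : SuppLE (∑ i ∈ s, A i) σ := by
  intro v hv
  rw [sum_mulVec]
  exact Finset.sum_eq_zero fun i hi => h i hi v hv

variable [DecidableEq n]

lemma SuppLE.mul_mpow_zero (h : SuppLE ρ σ) (hσ : σ.PosSemidef) : ρ * mpow σ 0 = ρ := by
  have hσP : σ * (mpow σ 0 - 1) = 0 := by
    nth_rw 1 [mul_sub, mul_one, ← mpow_one hσ, mpow_mul_mpow hσ, add_zero, mpow_one hσ, sub_self]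
  have hρP : ρ * (mpow σ 0 - 1) = 0 := by
    ext i j
    exact congrFun (h ((mpow σ 0 - 1).col j) (funext fun k => congrFun (congrFun hσP k) j)) i
  rwa [mul_sub, mul_one, sub_eq_zero] at hρP

lemma SuppLE.mpow_zero_mul (h : SuppLE ρ σ) (hρ : ρ.IsHermitian) (hσ : σ.PosSemidef) :
    mpow σ 0 * ρ = ρ := by
  simpa only [conjTranspose_mul, (isHermitian_mpow σ 0).eq, hρ.eq] using
    congrArg conjTranspose (h.mul_mpow_zero hσ)

lemma SuppLE.mpow_conj_mpow_neg_conj (h : SuppLE ρ σ) (hρ : ρ.IsHermitian) (hσ : σ.PosSemidef)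
    (t : ℝ) : mpow σ t * (mpow σ (-t) * ρ * mpow σ (-t)) * mpow σ t = ρ := by
  calc mpow σ t * (mpow σ (-t) * ρ * mpow σ (-t)) * mpow σ t
      = (mpow σ t * mpow σ (-t)) * ρ * (mpow σ (-t) * mpow σ t) := by simp only [mul_assoc]
    _ = ρ := by
      rw [mpow_mul_mpow hσ, mpow_mul_mpow hσ, add_neg_cancel, neg_add_cancel,
        h.mpow_zero_mul hρ hσ, h.mul_mpow_zero hσ]

end Support

section Jensen

open MeasureTheory in
lemma sum_rpow_mul_nonneg {ι : Type*} [Fintype ι] {α : ℝ} (hα : 1 < α ∧ α ≤ 2) {x w : ι → ℝ}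
    (hx : ∀ i, 0 ≤ x i)
    (h : ∀ u s : ℝ, 0 ≤ u → 0 < s → 0 ≤ ∑ i, x i ^ 2 / (u * x i + s) * w i) :
    0 ≤ ∑ i, x i ^ α * w i := by
  rcases hα.2.eq_or_lt with rfl | hα2
  · simpa using h 0 1 le_rfl one_pos
  obtain ⟨μ, hμ⟩ := Real.exists_measure_rpow_eq_integral_rpowIntegrand₁₂ ⟨hα.1, hα2⟩
  have hint : ∑ i, x i ^ α * w i =
      ∫ s in Set.Ioi 0, ∑ i, Real.rpowIntegrand₁₂ α s (x i) * w i ∂μ := by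
    rw [integral_finsetSum _ fun i _ => (hμ _ (hx i)).1.mul_const _]
    exact Finset.sum_congr rfl fun i _ => by rw [integral_mul_const, (hμ _ (hx i)).2]
  rw [hint]
  refine setIntegral_nonneg measurableSet_Ioi fun s (hs : 0 < s) => ?_
  have hker : ∀ i, Real.rpowIntegrand₁₂ α s (x i) =
      s ^ (α - 1 - 1) * (x i ^ 2 / (1 * x i + s)) := fun i => by
    rw [Real.rpowIntegrand₁₂_eq_mul_rpowIntegrand₀₁ (hx i) hs,
      Real.rpowIntegrand₀₁_eq_pow_div ⟨by linarith [hα.1], by linarith⟩ hs.le (hx i)]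
    ring
  simp only [hker, mul_assoc, ← Finset.mul_sum]
  exact mul_nonneg (Real.rpow_nonneg hs.le _) (h 1 s zero_le_one hs)

variable {n : Type} [Fintype n] {ι : Type*} [Fintype ι]

lemma conjTranspose_mul_mul_le_sum {A C : Matrix n n ℂ} {a l : ι → ℝ} {N : ι → Matrix n n ℂ}
    (hA : A.IsHermitian) (ha : ∀ i, 0 < a i) (hN : ∀ i, (N i).PosSemidef)
    (hle : ∑ i, a i • N i ≤ A) (hAC : A * C = ∑ i, l i • N i) :
    Cᴴ * A * C ≤ ∑ i, (l i ^ 2 / a i) • N i := by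
  classical
  have hsq : ∀ i, 0 ≤ (l i ^ 2 / a i) • N i - (l i • N i) * C - Cᴴ * (l i • N i)
      + Cᴴ * (a i • N i) * C := fun i => by
    have hexp : a i • (((l i / a i) • 1 - C)ᴴ * N i * ((l i / a i) • 1 - C)) =
        (l i ^ 2 / a i) • N i - (l i • N i) * C - Cᴴ * (l i • N i) + Cᴴ * (a i • N i) * C := by
      have := (ha i).ne'
      simp only [conjTranspose_sub, conjTranspose_smul, star_trivial, conjTranspose_one, sub_mul,
        mul_sub, smul_mul_assoc, mul_smul_comm, one_mul, mul_one]
      match_scalars <;> field_simp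
    rw [← hexp]
    exact smul_nonneg (ha i).le ((hN i).conjTranspose_mul_mul_same _).nonneg
  have hCA : Cᴴ * A = ∑ i, l i • N i := by
    have := congrArg conjTranspose hAC
    simpa only [conjTranspose_mul, hA.eq, conjTranspose_sum, conjTranspose_smul, star_trivial,
      (hN _).isHermitian.eq] using this
  have hsum : 0 ≤ ∑ i, (l i ^ 2 / a i) • N i - Cᴴ * A * C - Cᴴ * A * C
      + Cᴴ * (∑ i, a i • N i) * C := by
    have := Finset.sum_nonneg fun i (_ : i ∈ Finset.univ) => hsq i
    simp only [Finset.sum_add_distrib, Finset.sum_sub_distrib, ← Matrix.mul_sum,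
      ← Matrix.sum_mul] at this
    rwa [← hAC, ← mul_assoc Cᴴ A C, hAC, ← hCA] at this
  have hconj : Cᴴ * (∑ i, a i • N i) * C ≤ Cᴴ * A * C := star_left_conjugate_le_conjugate hle C
  rw [← sub_nonneg]
  calc 0 ≤ _ := add_nonneg hsum (sub_nonneg.mpr hconj)
    _ = ∑ i, (l i ^ 2 / a i) • N i - Cᴴ * A * C := by abel

variable [DecidableEq n]

lemma matFun_sq_div_le {T : Matrix n n ℂ} {l : ι → ℝ} {N : ι → Matrix n n ℂ}
    (hl : ∀ i, 0 ≤ l i) (hN : ∀ i, (N i).PosSemidef) (hN1 : ∑ i, N i ≤ 1)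
    (hT : ∑ i, l i • N i = T) {u s : ℝ} (hu : 0 ≤ u) (hs : 0 < s) :
    matFun (fun x => x ^ 2 / (u * x + s)) T ≤ ∑ i, (l i ^ 2 / (u * l i + s)) • N i := by
  have hTpos : T.PosSemidef := hT ▸ posSemidef_sum _ fun i _ => (hN i).smul (hl i)
  have hpos : ∀ {x : ℝ}, 0 ≤ x → 0 < u * x + s := fun hx => by positivity
  set A := matFun (fun x => u * x + s) T with hA
  set C := matFun (fun x => x / (u * x + s)) T with hC
  have hAC : A * C = ∑ i, l i • N i := by
    rw [hT, hA, hC, matFun_mul_matFun]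
    conv_rhs => rw [← matFun_id hTpos.isHermitian]
    exact matFun_congr hTpos fun x hx => mul_div_cancel₀ x (hpos hx).ne'
  have hle : ∑ i, (u * l i + s) • N i ≤ A := by
    have hA' : A = u • T + s • 1 := by
      have := matFun_const_mul s (fun _ => 1) T
      rw [hA, matFun_add, matFun_const_mul, matFun_id hTpos.isHermitian]
      simpa [matFun_one hTpos.isHermitian] using this
    have hsum : ∑ i, (u * l i + s) • N i = u • T + s • ∑ i, N i := by
      simp only [add_smul, mul_smul, Finset.sum_add_distrib, ← Finset.smul_sum, hT]
    rw [hA', hsum]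
    gcongr
  have hCAC : Cᴴ * A * C = matFun (fun x => x ^ 2 / (u * x + s)) T := by
    rw [(isHermitian_matFun _ T).eq, hA, hC, matFun_mul_matFun, matFun_mul_matFun]
    refine matFun_congr hTpos fun x hx => ?_
    have := (hpos hx).ne'
    field_simp
  rw [← hCAC]
  exact conjTranspose_mul_mul_le_sum (isHermitian_matFun _ T) (fun i => hpos (hl i)) hN hle hAC

lemma rtr_mul_mpow_le_sum {α : ℝ} (hα : 1 < α ∧ α ≤ 2) {σ T : Matrix n n ℂ} {l : ι → ℝ}
    {N : ι → Matrix n n ℂ} (hσ : σ.PosSemidef) (hl : ∀ i, 0 ≤ l i)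
    (hN : ∀ i, (N i).PosSemidef) (hN1 : ∑ i, N i ≤ 1) (hT : ∑ i, l i • N i = T) :
    rtr (σ * mpow T α) ≤ ∑ i, l i ^ α * rtr (σ * N i) := by
  have hTpos : T.PosSemidef := hT ▸ posSemidef_sum _ fun i _ => (hN i).smul (hl i)
  obtain ⟨E, -, hE⟩ := exists_matFun_eq_sum hTpos.isHermitian
  have hpow : mpow T α = matFun (fun x => x ^ α) T := by
    refine matFun_congr hTpos fun x _ => ?_
    split_ifs with h0
    · rw [h0, Real.zero_rpow (by linarith [hα.1])]
    · rfl
  let x : ι ⊕ n → ℝ := Sum.elim l hTpos.isHermitian.eigenvalues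
  let w : ι ⊕ n → ℝ := Sum.elim (fun i => rtr (σ * N i)) fun j => -rtr (σ * E j)
  have hx : ∀ i, 0 ≤ x i := Sum.rec hl hTpos.eigenvalues_nonneg
  have hsum : ∀ f : ℝ → ℝ, ∑ i, f (x i) * w i =
      rtr (σ * ∑ i, f (l i) • N i) - rtr (σ * matFun f T) := fun f => by
    simp [x, w, hE, Matrix.mul_sum, rtr_sum, rtr_smul, sub_eq_add_neg]
  have hnonneg := sum_rpow_mul_nonneg (w := w) hα hx fun u s hu hs => by
    rw [hsum fun x => x ^ 2 / (u * x + s), sub_nonneg]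
    exact rtr_mul_le_rtr_mul hσ (matFun_sq_div_le hl hN hN1 hT hu hs)
  rw [hsum fun x => x ^ α, sub_nonneg, ← hpow] at hnonneg
  simpa [Matrix.mul_sum, rtr_sum, rtr_smul] using hnonneg

end Jensen

section ReverseTest

variable {n : Type} {ι : Type*} [Fintype ι] {c : ι → ℝ} {M : ι → Matrix n n ℂ}
  {ρ σ : Matrix n n ℂ}

/-- The quantity `Q̂_α(ρ‖σ)` inside the logarithm that defines the geometric Rényi divergence.
It is meaningful when `SuppLE ρ σ`. -/
def geomQ [Fintype n] [DecidableEq n] (α : ℝ) (ρ σ : Matrix n n ℂ) : ℝ :=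
  rtr (σ * mpow (mpow σ (-(1/2 : ℝ)) * ρ * mpow σ (-(1/2 : ℝ))) α)

/-- A reverse test for `(ρ, σ)` in the sense of Matsumoto: positive semidefinite `M i` and
coefficients `c i` with `∑ c i • M i = ρ` and `∑ M i ≤ σ`. It prepares `ρ` and (up to a
remainder) `σ` from the classical pair with weights `c i * tr (M i)` and `tr (M i)`, the likelihood
ratios being the `c i`; zero ratios are absorbed in the inequality. -/
structure IsReverseTest (c : ι → ℝ) (M : ι → Matrix n n ℂ) (ρ σ : Matrix n n ℂ) : Prop where
  coeff_pos : ∀ i, 0 < c i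
  posSemidef : ∀ i, (M i).PosSemidef
  sum_smul : ∑ i, c i • M i = ρ
  sum_le : ∑ i, M i ≤ σ

namespace IsReverseTest

lemma posSemidef_right (h : IsReverseTest c M ρ σ) : σ.PosSemidef :=
  ((posSemidef_sum _ fun i _ => h.posSemidef i).nonneg.trans h.sum_le).posSemidef

variable [Fintype n]

lemma suppLE_apply (h : IsReverseTest c M ρ σ) (i : ι) : SuppLE (M i) σ := by
  refine suppLE_of_le (h.posSemidef i) (le_trans ?_ h.sum_le)
  exact Finset.single_le_sum (fun j _ => (h.posSemidef j).nonneg) (Finset.mem_univ i)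

lemma suppLE (h : IsReverseTest c M ρ σ) : SuppLE ρ σ :=
  h.sum_smul ▸ suppLE_sum fun i _ => (h.suppLE_apply i).smul (c i)

lemma geomQ_le [DecidableEq n] (h : IsReverseTest c M ρ σ) {α : ℝ} (hα : 1 < α ∧ α ≤ 2) :
    geomQ α ρ σ ≤ ∑ i, c i ^ α * rtr (M i) := by
  have hσ := h.posSemidef_right
  set S := mpow σ (-(1/2 : ℝ))
  have hSh : Sᴴ = S := (isHermitian_mpow σ _).eq
  have hSσS : S * σ * S = mpow σ 0 := mpow_neg_half_mul_mul hσ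
  have hpos : ∀ i, (S * M i * S).PosSemidef := fun i => by
    simpa only [hSh] using (h.posSemidef i).mul_mul_conjTranspose_same S
  have hle : ∑ i, S * M i * S ≤ 1 := by
    rw [← Matrix.sum_mul, ← Matrix.mul_sum]
    refine le_trans ?_ (hSσS.trans_le (mpow_zero_le_one σ))
    simpa only [star_eq_conjTranspose, hSh] using star_right_conjugate_le_conjugate h.sum_le S
  have hsum : ∑ i, c i • (S * M i * S) = S * ρ * S := by
    simp only [← h.sum_smul, Matrix.mul_sum, Matrix.sum_mul, mul_smul_comm, smul_mul_assoc]
  have htr : ∀ i, rtr (σ * (S * M i * S)) = rtr (M i) := fun i => by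
    rw [← mul_assoc, rtr_mul_comm, ← mul_assoc, ← mul_assoc, hSσS,
      (h.suppLE_apply i).mpow_zero_mul (h.posSemidef i).isHermitian hσ]
  simp only [← htr]
  exact rtr_mul_mpow_le_sum hα hσ (fun i => (h.coeff_pos i).le) hpos hle hsum

end IsReverseTest

lemma exists_isReverseTest [Fintype n] [DecidableEq n] (hρ : ρ.PosSemidef) (hσ : σ.PosSemidef)
    (h : SuppLE ρ σ) :
    ∃ (ι : Type) (_ : Fintype ι) (c : ι → ℝ) (M : ι → Matrix n n ℂ), IsReverseTest c M ρ σ ∧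
      ∀ α : ℝ, geomQ α ρ σ = ∑ i, c i ^ α * rtr (M i) := by
  set S := mpow σ (1/2 : ℝ) with hS
  set T := mpow σ (-(1/2 : ℝ)) * ρ * mpow σ (-(1/2 : ℝ)) with hT
  have hSS : S * S = σ := by
    rw [hS, mpow_mul_mpow hσ, add_halves, mpow_one hσ]
  have hSh : Sᴴ = S := (isHermitian_mpow σ _).eq
  have hTpos : T.PosSemidef := by
    simpa only [(isHermitian_mpow σ _).eq] using
      hρ.mul_mul_conjTranspose_same (mpow σ (-(1/2 : ℝ)))
  obtain ⟨ι, _, c, E, hc, hE, hpow⟩ := exists_mpow_eq_sum hTpos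
  have hsum : ∀ t : ℝ, ∑ i, c i ^ t • (S * E i * S) = S * mpow T t * S := fun t => by
    simp only [hpow, Matrix.mul_sum, Matrix.sum_mul, mul_smul_comm, smul_mul_assoc]
  refine ⟨ι, inferInstance, c, fun i => S * E i * S, ⟨hc, fun i => ?_, ?_, ?_⟩, fun α => ?_⟩
  · simpa only [hSh] using (hE i).mul_mul_conjTranspose_same S
  · have := hsum 1
    simp only [Real.rpow_one, mpow_one hTpos] at this
    rw [this, hT, hS, h.mpow_conj_mpow_neg_conj hρ.isHermitian hσ]
  · have hle := star_right_conjugate_le_conjugate (mpow_zero_le_one T) S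
    simpa [← hsum 0, star_eq_conjTranspose, hSh, hSS] using hle
  · have htr : geomQ α ρ σ = rtr (S * mpow T α * S) := by
      rw [geomQ, ← hT, mul_assoc, rtr_mul_comm S, mul_assoc, hSS, rtr_mul_comm]
    rw [htr, ← hsum α, rtr_sum]
    simp only [rtr_smul]

end ReverseTest

section GeometricRenyi

lemma elog_mono {x y : ℝ} (h : x ≤ y) : elog x ≤ elog y := by
  rw [elog, elog]
  split_ifs with hx hy hy
  · exact le_rfl
  · exact bot_le
  · exact absurd (h.trans hy) hx
  · exact EReal.coe_le_coe_iff.mpr (Real.logb_le_logb_of_le one_lt_two (not_le.mp hx) h)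

lemma elog_mul {x : ℝ} (hx : 0 < x) (y : ℝ) : elog (x * y) = elog x + elog y := by
  rcases le_or_gt y 0 with hy | hy
  · rw [elog, if_pos (mul_nonpos_of_nonneg_of_nonpos hx.le hy), elog, elog, if_pos hy,
      EReal.add_bot]
  · rw [elog, if_neg (mul_pos hx hy).not_ge, elog, if_neg hx.not_ge, elog, if_neg hy.not_ge,
      ← EReal.coe_add, Real.logb_mul hx.ne' hy.ne']

variable {n : Type} [Fintype n] [DecidableEq n] {α : ℝ} {ρ σ : Matrix n n ℂ}

lemma geomRenyi_of_suppLE (h : SuppLE ρ σ) :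
    geomRenyi α ρ σ = ((α - 1)⁻¹ : ℝ) * elog (geomQ α ρ σ) :=
  if_pos h

lemma geomRenyi_of_not_suppLE (h : ¬ SuppLE ρ σ) : geomRenyi α ρ σ = ⊤ :=
  if_neg h

lemma geomQ_pos (hρ : ρ.PosSemidef) (hσ : σ.PosSemidef) (h : SuppLE ρ σ) (hρ0 : ρ ≠ 0) :
    0 < geomQ α ρ σ := by
  obtain ⟨ι, _, c, M, hcM, hQ⟩ := exists_isReverseTest hρ hσ h
  have hterm : ∀ i, 0 ≤ c i ^ α * rtr (M i) := fun i =>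
    mul_nonneg (Real.rpow_nonneg (hcM.coeff_pos i).le _) (rtr_nonneg (hcM.posSemidef i))
  rw [hQ]
  refine (Finset.sum_nonneg fun i _ => hterm i).lt_of_ne' fun h0 => hρ0 ?_
  rw [← hcM.sum_smul]
  refine Finset.sum_eq_zero fun i _ => ?_
  have hi := (Finset.sum_eq_zero_iff_of_nonneg fun i _ => hterm i).mp h0 i (Finset.mem_univ i)
  have hMi := (mul_eq_zero.mp hi).resolve_left (Real.rpow_pos_of_pos (hcM.coeff_pos i) α).ne'
  rw [(rtr_eq_zero_iff (hcM.posSemidef i)).mp hMi, smul_zero]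

lemma geomRenyi_zero_left (hα : 1 < α) : geomRenyi α 0 σ = ⊥ := by
  have hQ : geomQ α 0 σ = 0 := by
    simp [geomQ, mpow, matFun_eq_cfc, rtr]
  rw [geomRenyi_of_suppLE fun v _ => zero_mulVec v, hQ, elog, if_pos le_rfl,
    EReal.coe_mul_bot_of_pos (inv_pos.mpr (sub_pos.mpr hα))]

lemma geomRenyi_ne_bot (hρ : ρ.PosSemidef) (hσ : σ.PosSemidef) (hρ0 : ρ ≠ 0) :
    geomRenyi α ρ σ ≠ ⊥ := by
  by_cases h : SuppLE ρ σ
  · rw [geomRenyi_of_suppLE h, elog, if_neg (geomQ_pos hρ hσ h hρ0).not_ge, ← EReal.coe_mul]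
    exact EReal.coe_ne_bot _
  · rw [geomRenyi_of_not_suppLE h]
    exact top_ne_bot

end GeometricRenyi

section CompletelyPositive

variable {n m : Type}

/-- Complete positivity of a linear map between matrix algebras: each `id_k ⊗ Φ` with `k ≥ 1`
preserves positive semidefiniteness. -/
def IsCompletelyPositive (Φ : Matrix n n ℂ →ₗ[ℂ] Matrix m m ℂ) : Prop :=
  ∀ k : ℕ, 1 ≤ k → ∀ M : Matrix (Fin k × n) (Fin k × n) ℂ, M.PosSemidef →
    (blockApply Φ M).PosSemidef

lemma IsCompletelyPositive.posSemidef_map {Φ : Matrix n n ℂ →ₗ[ℂ] Matrix m m ℂ}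
    (hΦ : IsCompletelyPositive Φ) {A : Matrix n n ℂ} (hA : A.PosSemidef) : (Φ A).PosSemidef :=
  (hΦ 1 le_rfl _ (hA.submatrix Prod.snd)).submatrix (Prod.mk (0 : Fin 1))

end CompletelyPositive

section Choi

variable {k m : Type} [Fintype k]

/-- `choiMap L X = ∑ a b, X a b • L_{ab}`, where `L_{ab}` is the `(a, b)` block of `L`: the linear
map whose Choi matrix is `L`, applied to `X`. -/
def choiMap : Matrix (k × m) (k × m) ℂ →ₗ[ℂ] Matrix k k ℂ →ₗ[ℂ] Matrix m m ℂ :=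
  LinearMap.mk₂ ℂ (fun L X => ∑ a, ∑ b, X a b • L.submatrix (Prod.mk a) (Prod.mk b))
    (fun L L' X => by simp [submatrix_add, Finset.sum_add_distrib])
    (fun c L X => by simp [submatrix_smul, Finset.smul_sum, smul_comm c])
    (fun L X X' => by simp [add_smul, Finset.sum_add_distrib])
    (fun c L X => by simp [mul_smul, Finset.smul_sum])

lemma choiMap_def (L : Matrix (k × m) (k × m) ℂ) (X : Matrix k k ℂ) :
    choiMap L X = ∑ a, ∑ b, X a b • L.submatrix (Prod.mk a) (Prod.mk b) :=
  rfl

lemma choiMap_blockApply {n : Type} (Φ : Matrix n n ℂ →ₗ[ℂ] Matrix m m ℂ)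
    (ν : Matrix (k × n) (k × n) ℂ) (X : Matrix k k ℂ) :
    choiMap (blockApply Φ ν) X = Φ (choiMap ν X) := by
  simp only [choiMap_def, map_sum, map_smul]
  rfl

lemma choiMap_vecMulVec_vec (R : Matrix m k ℂ) (X : Matrix k k ℂ) :
    choiMap (vecMulVec (vec R) (star (vec R))) X = R * X * Rᴴ := by
  ext x y
  simp only [choiMap_def, Matrix.sum_apply, Matrix.smul_apply, submatrix_apply, vecMulVec_apply,
    vec, Pi.star_apply, smul_eq_mul, Matrix.mul_apply, conjTranspose_apply, Finset.sum_mul]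
  rw [Finset.sum_comm]
  exact Finset.sum_congr rfl fun b _ => Finset.sum_congr rfl fun a _ => by ring

lemma posSemidef_choiMap [Finite m] {L : Matrix (k × m) (k × m) ℂ} {X : Matrix k k ℂ}
    (hL : L.PosSemidef) (hX : X.PosSemidef) : (choiMap L X).PosSemidef := by
  classical
  have := Fintype.ofFinite m
  let Z : Matrix (k × m) m ℂ := (1 : Matrix m m ℂ).submatrix Prod.snd id
  -- `H` is the blockwise Schur product of `X` and `L`, a principal submatrix of `X ⊗ₖ L`.
  let H : Matrix (k × m) (k × m) ℂ := (X ⊗ₖ L).submatrix (fun p => (p.1, p)) fun p => (p.1, p)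
  have hH : choiMap L X = Zᴴ * H * Z := by
    ext x y
    simp only [choiMap_def, Matrix.sum_apply, Matrix.smul_apply, submatrix_apply, smul_eq_mul,
      conjTranspose_submatrix, conjTranspose_one, Matrix.mul_apply, Matrix.one_apply, id_eq,
      kroneckerMap_apply, ite_mul, one_mul, zero_mul, Fintype.sum_prod_type, Finset.sum_ite_eq,
      Finset.mem_univ, ↓reduceIte, mul_ite, mul_one, mul_zero, Finset.sum_ite_eq', Z, H]
    exact Finset.sum_comm
  rw [hH]
  exact ((hX.kronecker hL).submatrix _).conjTranspose_mul_mul_same Z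

variable [Fintype m] [DecidableEq k]

lemma trace_choiMap_one (L : Matrix (k × m) (k × m) ℂ) : (choiMap L 1).trace = L.trace := by
  simp only [choiMap_def, Matrix.one_apply, ite_smul, one_smul, zero_smul, Finset.sum_ite_eq,
    Finset.mem_univ, if_true, trace_sum]
  exact (Fintype.sum_prod_type fun p : k × m => L p p).symm

lemma rtr_choiMap_le {L : Matrix (k × m) (k × m) ℂ} {X : Matrix k k ℂ} {s : ℝ}
    (hL : L.PosSemidef) (h : X ≤ s • 1) : rtr (choiMap L X) ≤ s * rtr L := by
  have hle : choiMap L X ≤ s • choiMap L 1 := by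
    rw [le_iff, ← LinearMap.map_smul_of_tower, ← map_sub]
    exact posSemidef_choiMap hL (le_iff.mp h)
  calc rtr (choiMap L X) ≤ rtr (s • choiMap L 1) := rtr_mono hle
    _ = s * rtr L := by rw [rtr_smul, rtr, trace_choiMap_one, rtr]

end Choi

section Purification

variable {n : Type} [Fintype n]

lemma exists_purification {W : Matrix n n ℂ} (hW : W.PosSemidef) :
    ∃ (ν : Matrix (Fin (Fintype.card n) × n) (Fin (Fintype.card n) × n) ℂ)
      (V : Matrix (Fin (Fintype.card n)) n ℂ),
      ν.PosSemidef ∧ ν.trace = W.trace ∧ V * W * Vᴴ ≤ 1 ∧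
      ∀ M : Matrix n n ℂ, M.IsHermitian → SuppLE M W → choiMap ν (V * M * Vᴴ) = M := by
  classical
  let e : Fin (Fintype.card n) ≃ n := (Fintype.equivFin n).symm
  let R : Matrix n (Fin (Fintype.card n)) ℂ := (mpow W (1/2)).submatrix id e
  let V : Matrix (Fin (Fintype.card n)) n ℂ := (mpow W (-(1/2))).submatrix e id
  have hVh : Vᴴ = (mpow W (-(1/2))).submatrix id e := by
    rw [conjTranspose_submatrix, (isHermitian_mpow W _).eq]
  have hRh : Rᴴ = (mpow W (1/2)).submatrix e id := by
    rw [conjTranspose_submatrix, (isHermitian_mpow W _).eq]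
  have hRR : R * Rᴴ = W := by
    rw [hRh, submatrix_mul_equiv, mpow_mul_mpow hW, add_halves, mpow_one hW, submatrix_id_id]
  have hRV : R * V = mpow W 0 := by
    rw [submatrix_mul_equiv, mpow_mul_mpow hW, add_neg_cancel, submatrix_id_id]
  refine ⟨vecMulVec (vec R) (star (vec R)), V, posSemidef_vecMulVec_self_star _, ?_, ?_, ?_⟩
  · rw [← trace_choiMap_one, choiMap_vecMulVec_vec, Matrix.mul_one, hRR]
  · have hVWV : V * W * Vᴴ = (mpow W 0).submatrix e e := by
      rw [hVh, ← mpow_neg_half_mul_mul hW]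
      rfl
    rw [hVWV, le_iff, ← submatrix_one_equiv e]
    exact (le_iff.mp (mpow_zero_le_one W)).submatrix e
  · intro M hM h
    rw [choiMap_vecMulVec_vec]
    calc R * (V * M * Vᴴ) * Rᴴ = (R * V) * M * (R * V)ᴴ := by
          simp only [conjTranspose_mul, Matrix.mul_assoc]
      _ = M := by
        rw [hRV, (isHermitian_mpow W 0).eq, h.mpow_zero_mul hM hW, h.mul_mpow_zero hW]

lemma exists_isState_choiMap_eq {ι : Type*} [Fintype ι] {w : ι → ℝ} {M : ι → Matrix n n ℂ}
    (hw : ∀ i, 0 < w i) (hM : ∀ i, (M i).PosSemidef) (hs : 0 < ∑ i, w i * rtr (M i)) :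
    ∃ (ν : Matrix (Fin (Fintype.card n) × n) (Fin (Fintype.card n) × n) ℂ)
      (X : ι → Matrix (Fin (Fintype.card n)) (Fin (Fintype.card n)) ℂ),
      IsState ν ∧ (∀ i, (X i).PosSemidef) ∧ (∀ i, choiMap ν (X i) = M i) ∧
      ∑ i, w i • X i ≤ (∑ i, w i * rtr (M i)) • 1 := by
  set s := ∑ i, w i * rtr (M i) with hs_def
  set W := s⁻¹ • ∑ i, w i • M i with hW
  have hwM : ∀ i, 0 ≤ w i • M i := fun i => smul_nonneg (hw i).le (hM i).nonneg
  have hWpos : W.PosSemidef :=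
    (smul_nonneg (inv_nonneg.mpr hs.le) (Finset.sum_nonneg fun i _ => hwM i)).posSemidef
  have hWtr : W.trace = 1 := by
    rw [trace_eq_ofReal_rtr hWpos, hW, rtr_smul, rtr_sum]
    simp only [rtr_smul, ← hs_def, inv_mul_cancel₀ hs.ne', Complex.ofReal_one]
  have hsupp : ∀ i, SuppLE (M i) W := fun i => by
    have hle : s⁻¹ • w i • M i ≤ W := smul_le_smul_of_nonneg_left
      (Finset.single_le_sum (fun j _ => hwM j) (Finset.mem_univ i)) (inv_nonneg.mpr hs.le)
    rw [smul_smul] at hle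
    have hc : 0 < s⁻¹ * w i := mul_pos (inv_pos.mpr hs) (hw i)
    simpa only [inv_smul_smul₀ hc.ne'] using
      (suppLE_of_le ((hM i).smul hc.le) hle).smul (s⁻¹ * w i)⁻¹
  obtain ⟨ν, V, hν, hνtr, hVW, hνV⟩ := exists_purification hWpos
  refine ⟨ν, fun i => V * M i * Vᴴ, ⟨hν, hνtr.trans hWtr⟩,
    fun i => (hM i).mul_mul_conjTranspose_same V,
    fun i => hνV _ (hM i).isHermitian (hsupp i), ?_⟩
  calc ∑ i, w i • (V * M i * Vᴴ) = s • (V * W * Vᴴ) := by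
        simp only [hW, Matrix.mul_smul, Matrix.smul_mul, smul_inv_smul₀ hs.ne', Matrix.mul_sum,
          Matrix.sum_mul]
    _ ≤ s • 1 := smul_le_smul_of_nonneg_left hVW hs.le

end Purification

section ChainRule

variable {n m : Type}

lemma one_le_card_of_ne_zero [Fintype n] {A : Matrix n n ℂ} (hA : A ≠ 0) : 1 ≤ Fintype.card n := by
  by_contra! h
  have := Fintype.card_eq_zero_iff.mp (Nat.lt_one_iff.mp h)
  exact hA (Subsingleton.elim A 0)

lemma IsReverseTest.comp [Finite m] {k ι κ : Type} [Fintype k] [Fintype ι] [Fintype κ]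
    {E F : Matrix n n ℂ →ₗ[ℂ] Matrix m m ℂ} (hF : ∀ A, A.PosSemidef → (F A).PosSemidef)
    {ρ σ : Matrix n n ℂ} {c : ι → ℝ} {M : ι → Matrix n n ℂ} (hM : IsReverseTest c M ρ σ)
    {ν : Matrix (k × n) (k × n) ℂ} {e : κ → ℝ} {L : κ → Matrix (k × m) (k × m) ℂ}
    (hL : IsReverseTest e L (blockApply E ν) (blockApply F ν))
    {X : ι → Matrix k k ℂ} (hX : ∀ i, (X i).PosSemidef) (hνX : ∀ i, choiMap ν (X i) = M i) :
    IsReverseTest (fun p : κ × ι => e p.1 * c p.2) (fun p => choiMap (L p.1) (X p.2))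
      (E ρ) (F σ) where
  coeff_pos p := mul_pos (hL.coeff_pos p.1) (hM.coeff_pos p.2)
  posSemidef p := posSemidef_choiMap (hL.posSemidef p.1) (hX p.2)
  sum_smul := by
    have hmap : E ρ = ∑ i, c i • choiMap (∑ j, e j • L j) (X i) := by
      simp only [hL.sum_smul, choiMap_blockApply, hνX, ← LinearMap.map_smul_of_tower, ← map_sum,
        hM.sum_smul]
    rw [hmap, Fintype.sum_prod_type_right]
    simp only [map_sum, LinearMap.sum_apply, LinearMap.map_smul_of_tower, LinearMap.smul_apply,
      Finset.smul_sum, smul_smul, mul_comm (c _)]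
  sum_le := by
    calc ∑ p : κ × ι, choiMap (L p.1) (X p.2) = ∑ i, choiMap (∑ j, L j) (X i) := by
          simp only [Fintype.sum_prod_type_right, map_sum, LinearMap.sum_apply]
      _ ≤ ∑ i, choiMap (blockApply F ν) (X i) := by
        refine Finset.sum_le_sum fun i _ => ?_
        rw [le_iff, ← LinearMap.sub_apply, ← map_sub]
        exact posSemidef_choiMap (le_iff.mp hL.sum_le) (hX i)
      _ = F (∑ i, M i) := by simp only [choiMap_blockApply, hνX, map_sum]
      _ ≤ F σ := by
        rw [le_iff, ← map_sub]
        exact hF _ (le_iff.mp hM.sum_le)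

variable [Fintype n] [DecidableEq n] [Fintype m] [DecidableEq m] {α : ℝ}
  {E F : Matrix n n ℂ →ₗ[ℂ] Matrix m m ℂ} {ρ σ : Matrix n n ℂ}

lemma exists_isState_geomQ_map_le (hα : 1 < α ∧ α ≤ 2) (hE : IsCompletelyPositive E)
    (hF : IsCompletelyPositive F) (hρ : ρ.PosSemidef) (hσ : σ.PosSemidef) (hρ0 : ρ ≠ 0)
    (h : SuppLE ρ σ) :
    ∃ ν : Matrix (Fin (Fintype.card n) × n) (Fin (Fintype.card n) × n) ℂ, IsState ν ∧
      (SuppLE (blockApply E ν) (blockApply F ν) → SuppLE (E ρ) (F σ) ∧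
        geomQ α (E ρ) (F σ) ≤ geomQ α ρ σ * geomQ α (blockApply E ν) (blockApply F ν)) := by
  obtain ⟨ι, _, c, M, hM, hQ⟩ := exists_isReverseTest hρ hσ h
  have hs : 0 < ∑ i, c i ^ α * rtr (M i) := hQ α ▸ geomQ_pos hρ hσ h hρ0
  obtain ⟨ν, X, hν, hX, hνX, hXle⟩ := exists_isState_choiMap_eq
    (fun i => Real.rpow_pos_of_pos (hM.coeff_pos i) α) hM.posSemidef hs
  rw [← hQ] at hXle
  refine ⟨ν, hν, fun hsupp => ?_⟩
  have hcard := one_le_card_of_ne_zero hρ0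
  obtain ⟨κ, _, e, L, hL, hQν⟩ :=
    exists_isReverseTest (hE _ hcard ν hν.1) (hF _ hcard ν hν.1) hsupp
  have hcomp := hM.comp (fun A hA => hF.posSemidef_map hA) hL hX hνX
  refine ⟨hcomp.suppLE, (hcomp.geomQ_le hα).trans ?_⟩
  calc ∑ p : κ × ι, (e p.1 * c p.2) ^ α * rtr (choiMap (L p.1) (X p.2))
      = ∑ j, e j ^ α * rtr (choiMap (L j) (∑ i, c i ^ α • X i)) := by
        simp only [Fintype.sum_prod_type, map_sum, LinearMap.map_smul_of_tower, rtr_sum, rtr_smul,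
          Finset.mul_sum, ← mul_assoc,
          Real.mul_rpow (hL.coeff_pos _).le (hM.coeff_pos _).le]
    _ ≤ ∑ j, e j ^ α * (geomQ α ρ σ * rtr (L j)) := by
        gcongr with j
        · exact Real.rpow_nonneg (hL.coeff_pos j).le α
        · exact rtr_choiMap_le (hL.posSemidef j) hXle
    _ = geomQ α ρ σ * geomQ α (blockApply E ν) (blockApply F ν) := by
        simp only [hQν, Finset.mul_sum, mul_left_comm]

lemma geomRenyi_map_le_add_chDiv (hα : 1 < α ∧ α ≤ 2) (hE : IsCompletelyPositive E)
    (hF : IsCompletelyPositive F) (hρ : ρ.PosSemidef) (hσ : σ.PosSemidef) (hρ0 : ρ ≠ 0)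
    (h : SuppLE ρ σ) :
    geomRenyi α (E ρ) (F σ) ≤ geomRenyi α ρ σ + chDiv (geomD α) E F := by
  obtain ⟨ν, hν, hle⟩ := exists_isState_geomQ_map_le hα hE hF hρ hσ hρ0 h
  have hcard := one_le_card_of_ne_zero hρ0
  suffices geomRenyi α (E ρ) (F σ) ≤
      geomRenyi α ρ σ + geomRenyi α (blockApply E ν) (blockApply F ν) by
    refine this.trans (add_le_add_right ?_ _)
    exact le_iSup₂_of_le (Fintype.card n) hcard (le_iSup₂_of_le ν hν le_rfl)
  by_cases hsupp : SuppLE (blockApply E ν) (blockApply F ν)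
  · obtain ⟨hsupp', hQ⟩ := hle hsupp
    have hα' : (0 : EReal) ≤ ((α - 1)⁻¹ : ℝ) :=
      EReal.coe_nonneg.mpr (inv_nonneg.mpr (sub_nonneg.mpr hα.1.le))
    rw [geomRenyi_of_suppLE hsupp', geomRenyi_of_suppLE h, geomRenyi_of_suppLE hsupp,
      ← EReal.left_distrib_of_nonneg_of_ne_top hα' (EReal.coe_ne_top _),
      ← elog_mul (geomQ_pos hρ hσ h hρ0)]
    exact mul_le_mul_of_nonneg_left (elog_mono hQ) hα'
  · rw [geomRenyi_of_not_suppLE hsupp, EReal.add_top_of_ne_bot (geomRenyi_ne_bot hρ hσ hρ0)]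
    exact le_top

theorem geomRenyi_chain_rule_general (hα : 1 < α ∧ α ≤ 2) (hE : IsCompletelyPositive E)
    (hF : IsCompletelyPositive F) (hρ : ρ.PosSemidef) (hσ : σ.PosSemidef) :
    geomRenyi α (E ρ) (F σ) ≤ geomRenyi α ρ σ + chDiv (geomD α) E F := by
  by_cases hEρ : E ρ = 0
  · rw [hEρ, geomRenyi_zero_left hα.1]
    exact bot_le
  have hρ0 : ρ ≠ 0 := fun h0 => hEρ (by rw [h0, map_zero])
  by_cases h : SuppLE ρ σ
  · exact geomRenyi_map_le_add_chDiv hα hE hF hρ hσ hρ0 h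
  have hchDiv : chDiv (geomD α) E F ≠ ⊥ := fun hbot => by
    have hle := geomRenyi_map_le_add_chDiv hα hE hF hρ hρ hρ0 fun _ hv => hv
    rw [hbot, EReal.add_bot, le_bot_iff] at hle
    exact geomRenyi_ne_bot (hE.posSemidef_map hρ) (hF.posSemidef_map hρ) hEρ hle
  rw [geomRenyi_of_not_suppLE h, EReal.top_add_of_ne_bot hchDiv]
  exact le_top

end ChainRule

/-- Chain rule for the geometric Rényi divergence. -/
theorem geomRenyi_chain_rule {dA dB : ℕ} (α : ℝ) (hα : 1 < α ∧ α ≤ 2)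
    (E F : Matrix (Fin dA) (Fin dA) ℂ →ₗ[ℂ] Matrix (Fin dB) (Fin dB) ℂ)
    (hE : IsQChannel E) (hF : IsQChannel F)
    (ρ σ : Matrix (Fin dA) (Fin dA) ℂ) (hρ : IsState ρ) (hσ : IsState σ) :
    geomRenyi α (E ρ) (F σ) ≤ geomRenyi α ρ σ + chDiv (geomD α) E F := by
  exact geomRenyi_chain_rule_general hα hE.2 hF.2 hρ.1 hσ.1

end QCD
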